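/- Let n ≥ 1 and 0 < α, s < 1. If φ is a (real- or complex-valued) Schwartz function on ℝⁿ×ℝ, then the function (x,t) ↦ D_right^α φ(x,t) + (-Δ)^s φ(x,t) is infinitely differentiable on ℝⁿ×ℝ. -/

import Mathlib

open MeasureTheory Set

/-- The normalization constant `C_α = 1/|Γ(-α)|` for the Marchaud fractional derivative. -/
noncomputable def Calpha (α : ℝ) : ℝ := 1 / |Real.Gamma (-α)|

/-- The normalization constant `C_{n,s} = 4^s Γ(n/2+s)/(π^{n/2}|Γ(-s)|)` for the
fractional Laplacian. -/
noncomputable def Cns (n : ℕ) (s : ℝ) : ℝ :=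
  (4 : ℝ) ^ s * Real.Gamma ((n : ℝ) / 2 + s) / (Real.pi ^ ((n : ℝ) / 2) * |Real.Gamma (-s)|)

/-- The right Marchaud fractional derivative of order `α` in the time variable, for a
complex-valued function: `D_right^α φ(x,t) = C_α ∫_t^∞ (φ(x,t) - φ(x,τ))/(τ-t)^{1+α} dτ`. -/
noncomputable def marchaudRightC {n : ℕ} (α : ℝ) (φ : EuclideanSpace ℝ (Fin n) × ℝ → ℂ)
    (x : EuclideanSpace ℝ (Fin n)) (t : ℝ) : ℂ :=
  (Calpha α : ℂ) * ∫ τ in Ioi t, (φ (x, t) - φ (x, τ)) / (((τ - t) ^ (1 + α) : ℝ) : ℂ)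

/-- The left Marchaud fractional derivative of order `α` in the time variable, for a
complex-valued function: `D_left^α φ(x,t) = C_α ∫_{-∞}^t (φ(x,t) - φ(x,τ))/(t-τ)^{1+α} dτ`. -/
noncomputable def marchaudLeftC {n : ℕ} (α : ℝ) (φ : EuclideanSpace ℝ (Fin n) × ℝ → ℂ)
    (x : EuclideanSpace ℝ (Fin n)) (t : ℝ) : ℂ :=
  (Calpha α : ℂ) * ∫ τ in Iio t, (φ (x, t) - φ (x, τ)) / (((t - τ) ^ (1 + α) : ℝ) : ℂ)

/-- The fractional Laplacian `(-Δ)^s` acting in the space variable, for a complex-valued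
function: `(-Δ)^s φ(x,t) = (C_{n,s}/2) ∫_{ℝⁿ} (2φ(x,t) - φ(x+y,t) - φ(x-y,t))/|y|^{n+2s} dy`. -/
noncomputable def fracLapC {n : ℕ} (s : ℝ) (φ : EuclideanSpace ℝ (Fin n) × ℝ → ℂ)
    (x : EuclideanSpace ℝ (Fin n)) (t : ℝ) : ℂ :=
  ((Cns n s / 2 : ℝ) : ℂ) * ∫ y : EuclideanSpace ℝ (Fin n),
    (2 * φ (x, t) - φ (x + y, t) - φ (x - y, t)) / ((‖y‖ ^ ((n : ℝ) + 2 * s) : ℝ) : ℂ)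

open scoped ContDiff

/-- A smooth function all of whose derivatives are globally bounded. -/
structure BoundedSmooth {E F : Type*} [NormedAddCommGroup E] [NormedSpace ℝ E]
    [NormedAddCommGroup F] [NormedSpace ℝ F] (f : E → F) : Prop where
  contDiff : ContDiff ℝ ∞ f
  bounded : ∀ k : ℕ, ∃ C : ℝ, ∀ x, ‖iteratedFDeriv ℝ k f x‖ ≤ C

namespace BoundedSmooth

variable {E F : Type*} [NormedAddCommGroup E] [NormedSpace ℝ E]
  [NormedAddCommGroup F] [NormedSpace ℝ F] {f : E → F}

theorem differentiable (hf : BoundedSmooth f) : Differentiable ℝ f :=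
  hf.contDiff.differentiable (by simp)

protected theorem fderiv (hf : BoundedSmooth f) : BoundedSmooth (fderiv ℝ f) where
  contDiff := hf.contDiff.fderiv_right (by simp)
  bounded k := by
    obtain ⟨C, hC⟩ := hf.bounded (k + 1)
    exact ⟨C, fun x => by rw [norm_iteratedFDeriv_fderiv]; exact hC x⟩

theorem exists_norm_le (hf : BoundedSmooth f) : ∃ C, 0 ≤ C ∧ ∀ x, ‖f x‖ ≤ C := by
  obtain ⟨C, hC⟩ := hf.bounded 0
  have h : ∀ x, ‖f x‖ ≤ C := fun x => by simpa using hC x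
  exact ⟨C, (norm_nonneg _).trans (h 0), h⟩

theorem exists_norm_sub_le (hf : BoundedSmooth f) :
    ∃ C, 0 ≤ C ∧ ∀ p q, ‖f q - f p‖ ≤ C * ‖q - p‖ := by
  obtain ⟨C, hC0, hC⟩ := hf.fderiv.exists_norm_le
  exact ⟨C, hC0, fun p q => convex_univ.norm_image_sub_le_of_norm_fderiv_le
    (fun x _ => hf.differentiable x) (fun x _ => hC x) (mem_univ p) (mem_univ q)⟩

theorem exists_norm_secondDifference_le (hf : BoundedSmooth f) :
    ∃ C, 0 ≤ C ∧ ∀ p v, ‖(2 : ℝ) • f p - f (p + v) - f (p - v)‖ ≤ C * ‖v‖ ^ 2 := by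
  obtain ⟨C, hC0, hC⟩ := hf.fderiv.exists_norm_sub_le
  refine ⟨C, hC0, fun p v => ?_⟩
  have hd : ∀ q, HasFDerivAt (fun q => f q - f (q - v)) (fderiv ℝ f q - fderiv ℝ f (q - v)) q :=
    fun q => by
      have h := (hasFDerivAt_comp_add_right (-v)).2 (hf.differentiable (q + -v)).hasFDerivAt
      simp only [← sub_eq_add_neg] at h
      exact (hf.differentiable q).hasFDerivAt.sub h
  have key := convex_univ.norm_image_sub_le_of_norm_fderiv_le (𝕜 := ℝ) (C := C * ‖v‖)
    (fun q _ => (hd q).differentiableAt)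
    (fun q _ => by simpa [(hd q).fderiv] using hC (q - v) q) (mem_univ p) (mem_univ (p + v))
  rw [← norm_neg]
  calc _ = ‖(f (p + v) - f (p + v - v)) - (f p - f (p - v))‖ := by
        rw [add_sub_cancel_right, two_smul]; congr 1; abel
    _ ≤ C * ‖v‖ ^ 2 := by simpa [pow_two, mul_assoc] using key

/-- A first difference is dominated by `min 1 ‖v‖`. -/
theorem exists_norm_sub_le_min (hf : BoundedSmooth f) :
    ∃ C, ∀ p v, ‖f p - f (p + v)‖ ≤ C * min 1 (‖v‖ ^ 1) := by
  obtain ⟨A, hA0, hA⟩ := hf.exists_norm_le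
  obtain ⟨B, hB0, hB⟩ := hf.exists_norm_sub_le
  refine ⟨2 * A + B, fun p v => ?_⟩
  have h1 : ‖f p - f (p + v)‖ ≤ 2 * A :=
    (norm_sub_le _ _).trans (by linarith [hA p, hA (p + v)])
  have h2 : ‖f p - f (p + v)‖ ≤ B * ‖v‖ := by simpa using hB (p + v) p
  rw [pow_one]
  rcases min_cases 1 ‖v‖ with ⟨h, -⟩ | ⟨h, -⟩ <;> rw [h]
  · linarith
  · nlinarith [norm_nonneg v]

/-- A second difference is dominated by `min 1 (‖v‖ ^ 2)`. -/
theorem exists_norm_secondDifference_le_min (hf : BoundedSmooth f) :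
    ∃ C, ∀ p v, ‖(2 : ℝ) • f p - f (p + v) - f (p - v)‖ ≤ C * min 1 (‖v‖ ^ 2) := by
  obtain ⟨A, hA0, hA⟩ := hf.exists_norm_le
  obtain ⟨B, hB0, hB⟩ := hf.exists_norm_secondDifference_le
  refine ⟨4 * A + B, fun p v => ?_⟩
  have h1 : ‖(2 : ℝ) • f p - f (p + v) - f (p - v)‖ ≤ 4 * A := by
    have h : ‖(2 : ℝ) • f p‖ = 2 * ‖f p‖ := by simp [norm_smul]
    have := norm_sub_le ((2 : ℝ) • f p - f (p + v)) (f (p - v))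
    have := norm_sub_le ((2 : ℝ) • f p) (f (p + v))
    linarith [hA p, hA (p + v), hA (p - v)]
  have h2 := hB p v
  rcases min_cases 1 (‖v‖ ^ 2) with ⟨h, -⟩ | ⟨h, -⟩ <;> rw [h]
  · linarith
  · nlinarith [sq_nonneg ‖v‖]

end BoundedSmooth

theorem SchwartzMap.boundedSmooth {E F : Type*} [NormedAddCommGroup E] [NormedSpace ℝ E]
    [NormedAddCommGroup F] [NormedSpace ℝ F] (φ : SchwartzMap E F) : BoundedSmooth φ where
  contDiff := φ.smooth ⊤
  bounded k := by
    obtain ⟨C, -, hC⟩ := φ.decay 0 k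
    exact ⟨C, fun x => by simpa using hC x⟩

/-- A weighted integral of finite differences of a bounded smooth function is smooth, provided the
integrand admits an integrable dominating function for every bounded smooth function. -/
theorem contDiff_integral_finiteDifference {E Y ι : Type} [NormedAddCommGroup E] [NormedSpace ℝ E]
    [MeasurableSpace Y] [Fintype ι] {μ : Measure Y} {w : Y → ℝ} (hw : Measurable w)
    (c : ι → ℝ) {v : ι → Y → E} (hv : ∀ i, StronglyMeasurable (v i))
    (hbound : ∀ (F : Type) [NormedAddCommGroup F] [NormedSpace ℝ F] (f : E → F),
      BoundedSmooth f → ∃ g : Y → ℝ, Integrable g μ ∧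
        ∀ᵐ y ∂μ, ∀ p, ‖w y • ∑ i, c i • f (p + v i y)‖ ≤ g y)
    {F : Type} [NormedAddCommGroup F] [NormedSpace ℝ F] {f : E → F} (hf : BoundedSmooth f) :
    ContDiff ℝ ∞ (fun p => ∫ y, w y • ∑ i, c i • f (p + v i y) ∂μ) := by
  have hmeas : ∀ (G : Type) [NormedAddCommGroup G] [NormedSpace ℝ G] (f : E → G),
      BoundedSmooth f → ∀ p,
        AEStronglyMeasurable (fun y => w y • ∑ i, c i • f (p + v i y)) μ := by
    intro G _ _ f hf p
    refine (hw.stronglyMeasurable.smul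
      (Finset.stronglyMeasurable_fun_sum _ fun i _ => ?_)).aestronglyMeasurable
    exact (hf.contDiff.continuous.comp_stronglyMeasurable
      (stronglyMeasurable_const.add (hv i))).const_smul (c i)
  have hderiv : ∀ (G : Type) [NormedAddCommGroup G] [NormedSpace ℝ G] (f : E → G),
      BoundedSmooth f → ∀ p, HasFDerivAt (fun p => ∫ y, w y • ∑ i, c i • f (p + v i y) ∂μ)
        (∫ y, w y • ∑ i, c i • fderiv ℝ f (p + v i y) ∂μ) p := by
    intro G _ _ f hf p
    obtain ⟨g₀, hg₀, hfg₀⟩ := hbound _ f hf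
    obtain ⟨g₁, hg₁, hfg₁⟩ := hbound _ _ hf.fderiv
    refine hasFDerivAt_integral_of_dominated_of_fderiv_le Filter.univ_mem
      (Filter.Eventually.of_forall (hmeas _ f hf))
      (hg₀.mono' (hmeas _ f hf p) (hfg₀.mono fun y hy => hy p)) (hmeas _ _ hf.fderiv p)
      (hfg₁.mono fun y hy q _ => hy q) hg₁ (Filter.Eventually.of_forall fun y q _ => ?_)
    exact (HasFDerivAt.fun_sum fun i _ => ((hasFDerivAt_comp_add_right (v i y)).2
      (hf.differentiable (q + v i y)).hasFDerivAt).const_smul (c i)).const_smul (w y)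
  refine contDiff_infty.2 fun m => ?_
  induction m generalizing F with
  | zero => exact contDiff_zero.2 (continuous_iff_continuousAt.2
      fun p => (hderiv F f hf p).continuousAt)
  | succ m ih =>
    push_cast
    exact contDiff_succ_iff_hasFDerivAt.2 ⟨_, ih hf.fderiv, hderiv F f hf⟩

theorem integrableOn_min_one_pow_mul_inv_rpow {m : ℕ} {b : ℝ} (hb : 0 < b) (hbm : b < m) :
    IntegrableOn (fun h : ℝ => min 1 (h ^ m) * (h ^ (1 + b))⁻¹) (Ioi 0) := by
  rw [← Ioc_union_Ioi_eq_Ioi zero_le_one]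
  refine IntegrableOn.union ?_ ?_
  · have h : IntegrableOn (fun h : ℝ => h ^ (m - (1 + b))) (Ioc 0 1) := by
      rw [← intervalIntegrable_iff_integrableOn_Ioc_of_le zero_le_one]
      exact intervalIntegral.intervalIntegrable_rpow' (by linarith)
    refine h.congr_fun (fun x hx => ?_) measurableSet_Ioc
    dsimp only
    rw [min_eq_right (pow_le_one₀ hx.1.le hx.2), Real.rpow_sub hx.1, Real.rpow_natCast,
      div_eq_mul_inv]
  · refine (integrableOn_Ioi_rpow_of_lt (a := -(1 + b)) (by linarith) one_pos).congr_fun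
      (fun x hx => ?_) measurableSet_Ioi
    have hx : 1 < x := hx
    dsimp only
    rw [min_eq_left (one_le_pow₀ hx.le), Real.rpow_neg (by linarith), one_mul]

theorem integrable_min_one_norm_pow_mul_inv_rpow {n m : ℕ} (hn : 1 ≤ n) {b : ℝ} (hb : 0 < b)
    (hbm : b < m) :
    Integrable fun y : EuclideanSpace ℝ (Fin n) =>
      min 1 (‖y‖ ^ m) * (‖y‖ ^ ((n : ℝ) + b))⁻¹ := by
  have : Nontrivial (EuclideanSpace ℝ (Fin n)) :=
    Module.nontrivial_of_finrank_pos (R := ℝ) (by rwa [finrank_euclideanSpace_fin])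
  rw [integrable_fun_norm_addHaar volume
    (f := fun r : ℝ => min 1 (r ^ m) * (r ^ ((n : ℝ) + b))⁻¹)]
  refine (integrableOn_min_one_pow_mul_inv_rpow hb hbm).congr_fun (fun x hx => ?_)
    measurableSet_Ioi
  have hx : 0 < x := hx
  have h : x ^ ((n : ℝ) + b) = x ^ (n - 1) * x ^ (1 + b) := by
    rw [← Real.rpow_natCast, ← Real.rpow_add hx, Nat.cast_sub hn]
    congr 1
    push_cast
    ring
  have h1 : x ^ (n - 1) ≠ 0 := by positivity
  have h2 : x ^ (1 + b) ≠ 0 := by positivity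
  simp only [finrank_euclideanSpace, Fintype.card_fin, smul_eq_mul, h]
  field_simp

theorem contDiff_marchaudRightC {n : ℕ} {α : ℝ} (hα0 : 0 < α) (hα1 : α < 1)
    {φ : EuclideanSpace ℝ (Fin n) × ℝ → ℂ} (hφ : BoundedSmooth φ) :
    ContDiff ℝ ∞ fun p : EuclideanSpace ℝ (Fin n) × ℝ => marchaudRightC α φ p.1 p.2 := by
  have key := contDiff_integral_finiteDifference (μ := volume.restrict (Ioi (0 : ℝ)))
    (w := fun h : ℝ => (h ^ (1 + α))⁻¹) (by fun_prop) ![1, -1]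
    (v := ![fun _ => 0, fun h : ℝ => ((0 : EuclideanSpace ℝ (Fin n)), h)])
    (by
      intro i
      fin_cases i
      · exact stronglyMeasurable_const
      · exact (by fun_prop : Continuous fun h : ℝ =>
          ((0 : EuclideanSpace ℝ (Fin n)), h)).stronglyMeasurable)
    (by
      intro F _ _ f hf
      obtain ⟨C, hC⟩ := hf.exists_norm_sub_le_min
      refine ⟨_, (integrableOn_min_one_pow_mul_inv_rpow (m := 1) hα0
        (by simpa using hα1)).const_mul C, ?_⟩
      filter_upwards [ae_restrict_mem measurableSet_Ioi] with h hh p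
      have hh : 0 < h := hh
      have := hC p (0, h)
      have hw : 0 ≤ (h ^ (1 + α))⁻¹ := by positivity
      have hn : ‖((0 : EuclideanSpace ℝ (Fin n)), h)‖ = h := by
        simp [Prod.norm_def, abs_of_pos hh, hh.le]
      rw [hn] at this
      simp only [Fin.sum_univ_two, Matrix.cons_val_zero, Matrix.cons_val_one, one_smul, add_zero,
        neg_smul, ← sub_eq_add_neg]
      rw [norm_smul, Real.norm_of_nonneg hw]
      nlinarith [mul_le_mul_of_nonneg_left this hw])
    hφ
  convert key.const_smul (Calpha α) using 2 with p
  rw [marchaudRightC, Complex.real_smul]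
  congr 1
  rw [← (measurePreserving_add_right volume p.2).setIntegral_preimage_emb
    (measurableEmbedding_addRight p.2)]
  simp only [preimage_add_const_Ioi, sub_self]
  refine integral_congr_ae (Filter.Eventually.of_forall fun h => ?_)
  simp only [Fin.sum_univ_two, Matrix.cons_val_zero, Matrix.cons_val_one, add_zero,
    add_sub_cancel_right, Complex.real_smul, Complex.ofReal_inv]
  rw [show p + ((0 : EuclideanSpace ℝ (Fin n)), h) = (p.1, h + p.2) by
    ext <;> simp [add_comm]]
  push_cast
  ring

theorem contDiff_fracLapC {n : ℕ} (hn : 1 ≤ n) {s : ℝ} (hs0 : 0 < s) (hs1 : s < 1)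
    {φ : EuclideanSpace ℝ (Fin n) × ℝ → ℂ} (hφ : BoundedSmooth φ) :
    ContDiff ℝ ∞ fun p : EuclideanSpace ℝ (Fin n) × ℝ => fracLapC s φ p.1 p.2 := by
  have key := contDiff_integral_finiteDifference
    (μ := (volume : Measure (EuclideanSpace ℝ (Fin n))))
    (w := fun y => (‖y‖ ^ ((n : ℝ) + 2 * s))⁻¹) (by fun_prop) ![2, -1, -1]
    (v := ![fun _ => 0, fun y => (y, (0 : ℝ)), fun y => -(y, (0 : ℝ))])
    (by
      intro i
      fin_cases i
      · exact stronglyMeasurable_const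
      · exact (by fun_prop : Continuous fun y : EuclideanSpace ℝ (Fin n) =>
          (y, (0 : ℝ))).stronglyMeasurable
      · exact (by fun_prop : Continuous fun y : EuclideanSpace ℝ (Fin n) =>
          -(y, (0 : ℝ))).stronglyMeasurable)
    (by
      intro F _ _ f hf
      obtain ⟨C, hC⟩ := hf.exists_norm_secondDifference_le_min
      refine ⟨_, (integrable_min_one_norm_pow_mul_inv_rpow (m := 2) (b := 2 * s) hn (by linarith)
        (by push_cast; linarith)).const_mul C, Filter.Eventually.of_forall fun y p => ?_⟩
      have := hC p (y, 0)
      have hw : 0 ≤ (‖y‖ ^ ((n : ℝ) + 2 * s))⁻¹ := by positivity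
      have hy : ‖(y, (0 : ℝ))‖ = ‖y‖ := by simp [Prod.norm_def]
      rw [hy] at this
      simp only [Fin.sum_univ_three, Matrix.cons_val, one_smul, add_zero,
        neg_smul, ← sub_eq_add_neg]
      rw [norm_smul, Real.norm_of_nonneg hw]
      nlinarith [mul_le_mul_of_nonneg_left this hw])
    hφ
  convert key.const_smul (Cns n s / 2) using 2 with p
  rw [fracLapC, Complex.real_smul]
  congr 1
  refine integral_congr_ae (Filter.Eventually.of_forall fun y => ?_)
  simp only [Fin.sum_univ_three, Matrix.cons_val, add_zero, ← sub_eq_add_neg,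
    Complex.real_smul, Complex.ofReal_inv]
  rw [show p + (y, (0 : ℝ)) = (p.1 + y, p.2) by ext <;> simp,
    show p - (y, (0 : ℝ)) = (p.1 - y, p.2) by ext <;> simp]
  push_cast
  ring

/-- for a Schwartz function `φ` on `ℝⁿ × ℝ`, the function
`(x,t) ↦ D_right^α φ(x,t) + (-Δ)^s φ(x,t)` is infinitely differentiable. -/
theorem smoothness_of_dual_fractional_operator
    (n : ℕ) (hn : 1 ≤ n) (α s : ℝ) (hα0 : 0 < α) (hα1 : α < 1)
    (hs0 : 0 < s) (hs1 : s < 1)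
    (φ : SchwartzMap (EuclideanSpace ℝ (Fin n) × ℝ) ℂ) :
    ContDiff ℝ (⊤ : ℕ∞) (fun p : EuclideanSpace ℝ (Fin n) × ℝ =>
      marchaudRightC α (⇑φ) p.1 p.2 + fracLapC s (⇑φ) p.1 p.2) := by
  exact (contDiff_marchaudRightC hα0 hα1 φ.boundedSmooth).add
    (contDiff_fracLapC hn hs0 hs1 φ.boundedSmooth)
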